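/- arXiv:1612.08236 — 3 statements merged into one kernel-verified Lean document; each statement's English description precedes it below -/
import Mathlib

section
/- Let R be a commutative ring of prime characteristic p, and let W₁(R) be the Weyl algebra over R generated by x, y with [x,y] = 1. Then for any central element r ∈ R, the identity (x + r·y^{p-1})^p = x^p + (r·y^{p-1})^p − r holds in W₁(R). -/
/-!
Put `f = r * y ^ (p - 1)`, which commutes with `y`, and let `a = x + t f` over `W₁(R)[t]`, with `t`
a central indeterminate. The derivative of `a ^ p` in `t` is `∑_{i < p} a ^ i * f * a ^ (p - 1 - i)`,
and in characteristic `p` one has `∑_{i < p} u ^ i * v ^ (p - 1 - i) = (u - v) ^ (p - 1)` for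
commuting `u`, `v`. Taking `u`, `v` to be left and right multiplication by `a`, this derivative
is `ad(a) ^ (p - 1) f`. Since `[a, y] = 1`, the operator `ad(a)` acts on powers of `y` as `d/dy`, so
the derivative equals `r * (p - 1)! = -r` by Wilson's theorem.

Hence in `a ^ p`, a polynomial in `t` of degree at most `p`, the coefficient of `t` is `-r` and those
of `t ^ k` for `1 < k < p` vanish, as `k` is invertible. The outer coefficients are `x ^ p` and
`f ^ p`, and setting `t = 1` gives the identity.
-/

/-- The relation defining the first Weyl algebra: `x * y = y * x + 1`,
where `x = ι 0`, `y = ι 1`. -/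
inductive WeylRel (R : Type*) [CommRing R] :
    FreeAlgebra R (Fin 2) → FreeAlgebra R (Fin 2) → Prop
  | weyl : WeylRel R (FreeAlgebra.ι R 0 * FreeAlgebra.ι R 1)
      (FreeAlgebra.ι R 1 * FreeAlgebra.ι R 0 + 1)

/-- The first Weyl algebra `W₁(R)` over a commutative ring `R`. -/
abbrev Weyl (R : Type*) [CommRing R] := RingQuot (WeylRel R)

noncomputable def Weyl.x (R : Type*) [CommRing R] : Weyl R :=
  RingQuot.mkAlgHom R (WeylRel R) (FreeAlgebra.ι R 0)

noncomputable def Weyl.y (R : Type*) [CommRing R] : Weyl R :=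
  RingQuot.mkAlgHom R (WeylRel R) (FreeAlgebra.ι R 1)

open Polynomial in
/-- Noncommutative Leibniz rule for powers. -/
theorem derivative_pow_eq_sum {W : Type*} [Ring W] (a : W[X]) (n : ℕ) :
    derivative (a ^ n) = ∑ i ∈ Finset.range n, a ^ i * derivative a * a ^ (n - 1 - i) := by
  induction n with
  | zero => simp
  | succ n ih =>
    rw [pow_succ, derivative_mul, ih, Finset.sum_range_succ, Finset.sum_mul]
    congr 1
    · refine Finset.sum_congr rfl fun i hi => ?_
      have hi := Finset.mem_range.1 hi
      rw [mul_assoc, ← pow_succ]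
      congr 2
      omega
    · simp

/-- `(-1) ^ k * (p - 1).choose k ≡ 1` modulo `p`, from Pascal's rule and `p ∣ p.choose (k + 1)`. -/
theorem neg_one_pow_mul_choose_pred {p : ℕ} [Fact p.Prime] {k : ℕ} (hk : k < p) :
    (-1 : ZMod p) ^ k * ((p - 1).choose k : ZMod p) = 1 := by
  have hp : p.Prime := Fact.out
  induction k with
  | zero => simp
  | succ k ih =>
    have h1 : (p.choose (k + 1) : ZMod p) = 0 :=
      (ZMod.natCast_eq_zero_iff _ _).2 (hp.dvd_choose_self (by omega) hk)
    have h2 : p.choose (k + 1) = (p - 1).choose k + (p - 1).choose (k + 1) := by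
      conv_lhs => rw [show p = p - 1 + 1 by have := hp.pos; omega]
      exact Nat.choose_succ_succ _ _
    rw [h2, Nat.cast_add] at h1
    linear_combination ih (by omega) - (-1 : ZMod p) ^ k * h1

/-- In characteristic `p`, `(u - v) ^ (p - 1) = (u ^ p - v ^ p) / (u - v)`, with the quotient
written as a geometric sum. -/
theorem geom_sum_eq_sub_pow_pred {A : Type*} [Ring A] {p : ℕ} [Fact p.Prime]
    (φ : ZMod p →+* A) {u v : A} (h : Commute u v) :
    ∑ i ∈ Finset.range p, u ^ i * v ^ (p - 1 - i) = (u - v) ^ (p - 1) := by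
  have hp : p.Prime := Fact.out
  rw [sub_eq_add_neg, h.neg_right.add_pow, show p - 1 + 1 = p by have := hp.pos; omega]
  refine Finset.sum_congr rfl fun i hi => ?_
  have hi := Finset.mem_range.1 hi
  have key := congrArg φ (neg_one_pow_mul_choose_pred (p := p) (k := p - 1 - i) (by omega))
  rw [Nat.choose_symm (by omega)] at key
  simp only [map_mul, map_pow, map_neg, map_one, map_natCast] at key
  rw [neg_pow v, mul_assoc (u ^ i), mul_assoc ((-1) ^ (p - 1 - i)), ← Nat.cast_comm,
    ← mul_assoc ((-1) ^ (p - 1 - i)), key, one_mul]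

/-- If `[a, y] = 1` then `ad(a) ^ k` acts on powers of `y` as the `k`-th derivative. -/
theorem ad_pow_apply_pow {A : Type*} [Ring A] {a y : A} (h : a * y = y * a + 1) (k n : ℕ) :
    ((LinearMap.mulLeft ℤ a - LinearMap.mulRight ℤ a) ^ k) (y ^ n)
      = n.descFactorial k • y ^ (n - k) := by
  have hy (m : ℕ) : a * y ^ m = y ^ m * a + m • y ^ (m - 1) := by
    induction m with
    | zero => simp
    | succ m ih =>
      rw [pow_succ, ← mul_assoc, ih, add_mul, mul_assoc, h, mul_add, mul_one, smul_mul_assoc,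
        ← mul_assoc]
      rcases m with _ | m
      · simp
      · simp only [Nat.add_sub_cancel, ← pow_succ, add_smul, one_smul]
        abel
  induction k with
  | zero => simp
  | succ k ih =>
    rw [pow_succ', Module.End.mul_apply, ih, map_nsmul, LinearMap.sub_apply,
      LinearMap.mulLeft_apply, LinearMap.mulRight_apply, hy, add_sub_cancel_left,
      Nat.descFactorial_succ, ← mul_smul, mul_comm, Nat.sub_sub]

/-- If `[a, y] = 1` in characteristic `p`, then `∑ a ^ i * y ^ (p - 1) * a ^ (p - 1 - i)` is
`ad(a) ^ (p - 1) (y ^ (p - 1)) = (p - 1)! = -1`. -/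
theorem sum_conj_pow_pred {A : Type*} [Ring A] {p : ℕ} [Fact p.Prime]
    (φ : ZMod p →+* A) {a y : A} (h : a * y = y * a + 1) :
    ∑ i ∈ Finset.range p, a ^ i * y ^ (p - 1) * a ^ (p - 1 - i) = -1 := by
  let ψ : ZMod p →+* Module.End ℤ A :=
    { toFun := fun z => LinearMap.mulLeft ℤ (φ z)
      map_one' := by ext; simp
      map_mul' := fun s t => by ext; simp
      map_zero' := by ext; simp
      map_add' := fun s t => by ext; simp [add_mul] }
  have h1 := congrArg (fun T : Module.End ℤ A => T (y ^ (p - 1)))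
    (geom_sum_eq_sub_pow_pred ψ (LinearMap.commute_mulLeft_right (R := ℤ) a a))
  have h2 := congrArg φ (ZMod.wilsons_lemma p)
  simp only [map_natCast, map_neg, map_one] at h2
  simp only [ad_pow_apply_pow h, Nat.descFactorial_self, Nat.sub_self, pow_zero, nsmul_eq_mul,
    mul_one, h2] at h1
  rw [← h1, LinearMap.sum_apply]
  refine Finset.sum_congr rfl fun i _ => ?_
  simp [LinearMap.pow_mulLeft, LinearMap.pow_mulRight, mul_assoc]

open Polynomial in
/-- The identity holds for any pair with `[x, y] = 1` in any ring of characteristic `p`, and any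
central `c`. -/
theorem add_central_mul_pow_pred_pow {W : Type*} [Ring W] {p : ℕ} [Fact p.Prime]
    (φ : ZMod p →+* W) {x y c : W} (h : x * y = y * x + 1) (hc : ∀ w, Commute c w) :
    (x + c * y ^ (p - 1)) ^ p = x ^ p + (c * y ^ (p - 1)) ^ p - c := by
  have hp : p.Prime := Fact.out
  set f := c * y ^ (p - 1) with hf
  have hfy : f * y = y * f := ((hc y).mul_left ((Commute.refl y).pow_left _)).eq
  let a : W[X] := C x + C f * X
  have hCc (w : W[X]) : Commute (C c) w := by
    refine Polynomial.ext fun n => ?_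
    rw [coeff_C_mul, coeff_mul_C, (hc _).eq]
  have hay : a * C y = C y * a + 1 := by
    simp only [a, add_mul, mul_add, ← C_mul, h, C_add, C_1]
    rw [mul_assoc (C f), X_mul_C, ← mul_assoc (C f), ← mul_assoc (C y), ← C_mul, ← C_mul, hfy]
    abel
  have hda : derivative a = C f := by simp [a]
  have hder : derivative (a ^ p) = C (-c) := by
    rw [derivative_pow_eq_sum, hda]
    have := congrArg (C c * ·) (sum_conj_pow_pred (C.comp φ) hay)
    simp only [Finset.mul_sum, mul_neg, mul_one] at this
    rw [C_neg, ← this]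
    refine Finset.sum_congr rfl fun i _ => ?_
    rw [hf, C_mul, C_pow, ← mul_assoc, ← mul_assoc, ← mul_assoc, (hCc (a ^ i)).eq]
  have hdeg : a.natDegree ≤ 1 := by
    refine natDegree_add_le_of_degree_le (by simp) (natDegree_mul_le_of_le (m := 0) (n := 1) (by simp) natDegree_X_le)
  have hdegp : (a ^ p).natDegree < p + 1 :=
    Nat.lt_succ_of_le (by simpa using natDegree_pow_le_of_le p hdeg)
  have hcoeff (k : ℕ) : (a ^ p).coeff (k + 1) * ((k + 1 : ℕ) : W) = (C (-c)).coeff k := by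
    rw [← hder, coeff_derivative, Nat.cast_succ]
  have h0 : (a ^ p).coeff 0 = x ^ p := by
    rw [← constantCoeff_apply, map_pow]
    simp [a]
  have h1 : (a ^ p).coeff 1 = -c := by simpa using hcoeff 0
  have hmid (k : ℕ) (hk : 1 < k) (hkp : k < p) : (a ^ p).coeff k = 0 := by
    have hu : IsUnit (k : W) := by
      have hz : (k : ZMod p) ≠ 0 := fun h =>
        Nat.not_dvd_of_pos_of_lt (by omega) hkp ((ZMod.natCast_eq_zero_iff _ _).1 h)
      simpa using (IsUnit.mk0 _ hz).map φ
    obtain ⟨j, rfl⟩ : ∃ j, k = j + 1 := ⟨k - 1, by omega⟩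
    refine hu.mul_left_eq_zero.1 ?_
    rw [hcoeff, coeff_C, if_neg (by omega)]
  have hptop : (a ^ p).coeff p = f ^ p := by
    have := coeff_pow_of_natDegree_le (n := 1) (m := p) hdeg
    simpa [a] using this
  -- `1` is central, so evaluation at `t = 1` is a ring homomorphism.
  have heval : (a ^ p).eval 1 = (x + f) ^ p := by
    have := map_pow (eval₂RingHom' (RingHom.id W) 1 (fun w => Commute.one_right _)) a p
    have ha : a.eval 1 = x + f := by simp [a]
    rw [← ha]
    exact this
  rw [← heval, eval_eq_sum_range' hdegp]
  simp only [one_pow, mul_one]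
  obtain ⟨q, hq⟩ : ∃ q, p = q + 2 := ⟨p - 2, by have := hp.two_le; omega⟩
  have hsum : ∑ k ∈ Finset.range q, (a ^ p).coeff (k + 1 + 1) = 0 :=
    Finset.sum_eq_zero fun k hk => hmid _ (by omega) (by have := Finset.mem_range.1 hk; omega)
  rw [Finset.sum_range_succ, hptop, show Finset.range p = Finset.range (q + 1 + 1) by rw [hq],
    Finset.sum_range_succ', Finset.sum_range_succ', hsum, h0, zero_add, h1]
  abel

/-- In the Weyl algebra over a commutative ring `R` of prime characteristic `p`,
for any `r ∈ R` one has `(x + r·y^{p-1})^p = x^p + (r·y^{p-1})^p − r`. -/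
theorem weyl_pow_p_identity (R : Type*) [CommRing R] (p : ℕ) [Fact p.Prime]
    [CharP R p] (r : R) :
    (Weyl.x R + algebraMap R (Weyl R) r * (Weyl.y R) ^ (p - 1)) ^ p =
      (Weyl.x R) ^ p + (algebraMap R (Weyl R) r * (Weyl.y R) ^ (p - 1)) ^ p
        - algebraMap R (Weyl R) r := by
  refine add_central_mul_pow_pred_pow
    ((algebraMap R (Weyl R)).comp (ZMod.castHom dvd_rfl R)) ?_ (Algebra.commutes r)
  simpa [Weyl.x, Weyl.y] using RingQuot.mkAlgHom_rel R (WeylRel.weyl (R := R))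
end

section
/- Let k be a field of characteristic p > 0. The quotient of the Weyl algebra W₁(k) = k⟨α, D⟩ (with [α, D] = 1) by the two-sided ideal generated by D^p is isomorphic as a k[α^p]-algebra to the p × p matrix algebra over k[α^p]. -/
/-!
The Weyl algebra acts on `k[x]` with `α` acting as multiplication by `x` and `D` as `-d/dx`.
In characteristic `p` this action is linear over `k[x^p] = k[t]`, over which `k[x]` is free with
basis `1, x, …, x^(p-1)`, and `D^p` acts as zero.  This gives a `k`-algebra map `φ` from
`W₁(k)/(D^p)` to the endomorphisms of `k[t]^p`, under which `α^p` acts as `t`.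

* `φ` is surjective: `D^(p-1)` sends `x^(p-1)` to the nonzero constant `(-1)^(p-1) (p-1)!` and
  kills the other basis vectors, so `α^i D^(p-1) α^(p-1-j)` is a nonzero scalar multiple of the
  matrix unit `E_ij` (`single_comp`), and `t` is the image of `α^p`.
* `φ` is injective: the monomials `α^i D^j` with `i, j < p` generate `W₁(k)/(D^p)` over `k[α^p]`
  (`spanMap_surjective`), so there are surjections `k[t]^(p²) → W₁(k)/(D^p) → M_p(k[t])`.  A
  surjective endomorphism of a finite module over a commutative ring is injective, hence so is
  the composite, and hence so is `φ`.
-/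

/-- Relations defining `W₁(k)/(D^p)`: here `α = ι 0`, `D = ι 1`, with the Weyl
relation `α * D = D * α + 1` and the relation `D^p = 0`. -/
inductive WeylModDpRel (k : Type*) [Field k] (p : ℕ) :
    FreeAlgebra k (Fin 2) → FreeAlgebra k (Fin 2) → Prop
  | weyl : WeylModDpRel k p (FreeAlgebra.ι k 0 * FreeAlgebra.ι k 1)
      (FreeAlgebra.ι k 1 * FreeAlgebra.ι k 0 + 1)
  | dp : WeylModDpRel k p ((FreeAlgebra.ι k 1) ^ p) 0

namespace WeylModDp

open Polynomial

/-! ### Spanning by normally ordered monomials -/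

section Span

variable {k R : Type*} [Field k] [Ring R] [Algebra k R] {a d : R}

lemma d_mul_pow (h : a * d = d * a + 1) (n : ℕ) :
    d * a ^ (n + 1) = a ^ (n + 1) * d - (n + 1 : ℕ) • a ^ n := by
  have h' : d * a = a * d - 1 := by rw [h]; abel
  induction n with
  | zero => simp [h']
  | succ n ih =>
    rw [pow_succ, ← mul_assoc, ih, sub_mul, mul_assoc, h', smul_mul_assoc, ← pow_succ, mul_sub,
      ← mul_assoc, ← pow_succ, succ_nsmul _ (n + 1), mul_one]
    abel

lemma span_monomials (h : a * d = d * a + 1) (hg : Algebra.adjoin k {a, d} = ⊤) :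
    Submodule.span k {x : R | ∃ n m : ℕ, x = a ^ n * d ^ m} = ⊤ := by
  set S := Submodule.span k {x : R | ∃ n m : ℕ, x = a ^ n * d ^ m} with hS
  have mon : ∀ n m : ℕ, a ^ n * d ^ m ∈ S := fun n m => Submodule.subset_span ⟨n, m, rfl⟩
  have ha : ∀ y ∈ S, a * y ∈ S := by
    intro y hy
    induction hy using Submodule.span_induction with
    | mem x hx =>
      obtain ⟨n, m, rfl⟩ := hx
      rw [← mul_assoc, ← pow_succ']
      exact mon _ _
    | zero => simp
    | add x y _ _ hx hy => rw [mul_add]; exact S.add_mem hx hy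
    | smul c x _ hx => rw [mul_smul_comm]; exact S.smul_mem c hx
  have hd : ∀ y ∈ S, d * y ∈ S := by
    intro y hy
    induction hy using Submodule.span_induction with
    | mem x hx =>
      obtain ⟨n, m, rfl⟩ := hx
      cases n with
      | zero =>
        have := mon 0 (m + 1)
        simpa [pow_succ'] using this
      | succ n =>
        rw [← mul_assoc, d_mul_pow h, sub_mul, mul_assoc, ← pow_succ', smul_mul_assoc]
        exact S.sub_mem (mon _ _) (S.nsmul_mem (mon _ _) _)
    | zero => simp
    | add x y _ _ hx hy => rw [mul_add]; exact S.add_mem hx hy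
    | smul c x _ hx => rw [mul_smul_comm]; exact S.smul_mem c hx
  -- `S` is a left ideal containing `1`.
  have key : ∀ x ∈ Algebra.adjoin k {a, d}, ∀ y ∈ S, x * y ∈ S := by
    intro x hx
    induction hx using Algebra.adjoin_induction with
    | mem x hx =>
      rcases hx with rfl | rfl
      · exact ha
      · exact hd
    | algebraMap r => intro y hy; rw [← Algebra.smul_def]; exact S.smul_mem r hy
    | add x y _ _ hx hy => intro z hz; rw [add_mul]; exact S.add_mem (hx z hz) (hy z hz)
    | mul x y _ _ hx hy => intro z hz; rw [mul_assoc]; exact hx _ (hy z hz)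
  rw [eq_top_iff]
  intro x _
  have h1 : (1 : R) ∈ S := by simpa using mon 0 0
  simpa using key x (by rw [hg]; trivial) 1 h1

/-- The map `k[t]^(p²) → R`, `c ↦ ∑ c_ij(a^p) a^i d^j`, the source being written as
`p × p` matrices over `k[t]`. -/
noncomputable def spanMap (k : Type*) {R : Type*} [Field k] [Ring R] [Algebra k R] (p : ℕ)
    (a d : R) : Matrix (Fin p) (Fin p) k[X] →ₗ[k] R :=
  ∑ i : Fin p, ∑ j : Fin p,
    LinearMap.mulRight k (a ^ (i : ℕ) * d ^ (j : ℕ)) ∘ₗ (aeval (a ^ p)).toLinearMap ∘ₗ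
      Matrix.entryLinearMap k k[X] i j

lemma spanMap_apply (p : ℕ) (c : Matrix (Fin p) (Fin p) k[X]) :
    spanMap k p a d c =
      ∑ i : Fin p, ∑ j : Fin p, aeval (a ^ p) (c i j) * (a ^ (i : ℕ) * d ^ (j : ℕ)) := by
  simp [spanMap, LinearMap.sum_apply, mul_assoc]

lemma spanMap_surjective {p : ℕ} (hp : 0 < p) (h : a * d = d * a + 1) (hd : d ^ p = 0)
    (hg : Algebra.adjoin k {a, d} = ⊤) : Function.Surjective (spanMap k p a d) := by
  rw [← LinearMap.range_eq_top, eq_top_iff, ← span_monomials h hg, Submodule.span_le]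
  rintro _ ⟨n, m, rfl⟩
  by_cases hm : m < p
  · refine ⟨Matrix.single ⟨n % p, Nat.mod_lt _ hp⟩ ⟨m, hm⟩ (X ^ (n / p)), ?_⟩
    rw [spanMap_apply, Finset.sum_eq_single ⟨n % p, Nat.mod_lt _ hp⟩, Finset.sum_eq_single ⟨m, hm⟩]
    · simp only [Matrix.single_apply_same, map_pow, aeval_X]
      rw [← mul_assoc, ← pow_mul, ← pow_add, Nat.div_add_mod]
    · intro j _ hj
      rw [Matrix.single_apply_of_col_ne _ _ hj.symm]; simp
    · simp
    · intro i _ hi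
      refine Finset.sum_eq_zero fun j _ => ?_
      rw [Matrix.single_apply_of_row_ne hi.symm]; simp
    · simp
  · rw [← Nat.add_sub_of_le (not_lt.mp hm), pow_add, hd]
    simp

end Span

/-! ### The action on `k[x]` -/

section Action

variable (k : Type*) [Field k] (p : ℕ) [Fact p.Prime]

/-- The element `x^n` of `k[x]`, viewed in the free `k[t]`-module of rank `p` on the basis
`1, x, …, x^(p-1)`, where `t = x^p`. -/
noncomputable def e (n : ℕ) : Fin p → k[X] :=
  (X ^ (n / p) : k[X]) •
    Pi.single ⟨n % p, Nat.mod_lt _ (Fact.out : p.Prime).pos⟩ (1 : k[X])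

/-- Multiplication by `x`. -/
noncomputable def A : Module.End k[X] (Fin p → k[X]) :=
  (Pi.basisFun k[X] (Fin p)).constr k[X] fun i => e k p (i + 1)

/-- The operator `-d/dx`. -/
noncomputable def N : Module.End k[X] (Fin p → k[X]) :=
  (Pi.basisFun k[X] (Fin p)).constr k[X] fun i => (-(i : ℕ) : k[X]) • e k p (i - 1)

lemma e_fin (i : Fin p) : e k p i = Pi.single i 1 := by
  simp [e, Nat.mod_eq_of_lt i.2, Nat.div_eq_of_lt i.2]

lemma e_add (n m : ℕ) : e k p (n + p * m) = (X ^ m : k[X]) • e k p n := by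
  have hp := (Fact.out : p.Prime).pos
  simp only [e, Nat.add_mul_mod_self_left, Nat.add_mul_div_left _ _ hp, smul_smul, ← pow_add,
    add_comm m]

lemma e_eq (n : ℕ) : e k p n =
    (X ^ (n / p) : k[X]) • e k p (⟨n % p, Nat.mod_lt _ (Fact.out : p.Prime).pos⟩ : Fin p) := by
  rw [e_fin]; rfl

lemma ext_e {f g : Module.End k[X] (Fin p → k[X])}
    (h : ∀ i < p, f (e k p i) = g (e k p i)) : f = g := by
  refine (Pi.basisFun k[X] (Fin p)).ext fun i => ?_
  simpa [e_fin] using h i i.2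

lemma A_e (n : ℕ) : A k p (e k p n) = e k p (n + 1) := by
  have h : ∀ i : Fin p, A k p (e k p i) = e k p (i + 1) := fun i => by
    rw [e_fin, ← Pi.basisFun_apply, A, Module.Basis.constr_basis]
  rw [e_eq, map_smul, h, ← e_add]
  congr 1
  have := Nat.mod_add_div n p
  simp only
  omega

lemma A_pow_e (m n : ℕ) : (A k p ^ m) (e k p n) = e k p (n + m) := by
  induction m with
  | zero => simp
  | succ m ih => rw [pow_succ', Module.End.mul_apply, ih, A_e]; rfl

lemma A_pow_p : A k p ^ p = algebraMap k[X] _ X := by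
  refine ext_e k p fun i _ => ?_
  have := e_add k p i 1
  rw [A_pow_e, Module.algebraMap_end_apply]
  simpa using this

variable [CharP k p]

/-- The rule `-d/dx x^n = -n x^(n-1)` holds for all `n` because `t = x^p` has derivative zero;
the truncated exponent at `n = 0` is harmless since the coefficient vanishes. -/
lemma N_e (n : ℕ) : N k p (e k p n) = (-(n : k[X])) • e k p (n - 1) := by
  have h : ∀ i : Fin p, N k p (e k p i) = (-(i : ℕ) : k[X]) • e k p (i - 1) := fun i => by
    rw [e_fin, ← Pi.basisFun_apply, N, Module.Basis.constr_basis]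
  rw [e_eq, map_smul, h, smul_comm, ← e_add]
  have hc : ((n % p : ℕ) : k[X]) = n := by
    conv_rhs => rw [← Nat.mod_add_div n p]
    simp
  simp only [hc]
  by_cases h0 : n % p = 0
  · have : (n : k[X]) = 0 := by rw [← hc, h0]; simp
    simp [this]
  · congr 2
    have := Nat.mod_add_div n p
    omega

lemma N_pow_e (m n : ℕ) : (N k p ^ m) (e k p n) =
    ((-1) ^ m * (n.descFactorial m : k[X])) • e k p (n - m) := by
  induction m with
  | zero => simp
  | succ m ih =>
    rw [pow_succ', Module.End.mul_apply, ih, map_smul, N_e, smul_smul, Nat.descFactorial_succ,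
      Nat.sub_sub]
    congr 1
    push_cast
    ring

lemma A_mul_N : A k p * N k p = N k p * A k p + 1 := by
  refine ext_e k p fun i _ => ?_
  simp only [Module.End.mul_apply, LinearMap.add_apply, Module.End.one_apply, N_e, A_e, map_smul]
  cases i with
  | zero => simp
  | succ i => simp only [Nat.add_sub_cancel]; push_cast; module

lemma N_pow_p : N k p ^ p = 0 := by
  refine ext_e k p fun i hi => ?_
  rw [N_pow_e, Nat.descFactorial_of_lt hi]
  simp

/-- `α^i D^(p-1) α^(p-1-j)` acts as the constant `(-1)^(p-1) (p-1)!` times the matrix unit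
`E_ij`. -/
lemma single_comp (i j l : Fin p) :
    (A k p ^ (i : ℕ) * N k p ^ (p - 1) * A k p ^ (p - 1 - j)) (e k p l) =
      if l = j then C ((-1) ^ (p - 1) * ((p - 1).factorial : k)) • e k p i else 0 := by
  have hp := (Fact.out : p.Prime).pos
  simp only [Module.End.mul_apply, A_pow_e]
  rcases lt_trichotomy (l : ℕ) j with h | h | h
  · rw [N_pow_e, Nat.descFactorial_of_lt (by omega), if_neg (by rintro rfl; omega)]
    simp
  · have h' : l = j := Fin.ext h
    subst h'
    rw [show (l : ℕ) + (p - 1 - l) = p - 1 by omega, N_pow_e, Nat.descFactorial_self, map_smul,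
      A_pow_e]
    simp
  · -- Here `x^(l+p-1-j)` is `t x^(l-1-j)`, and the exponent `l-1-j` is less than `p-1`.
    rw [show (l : ℕ) + (p - 1 - j) = (l - 1 - j) + p * 1 by omega, e_add, map_smul, N_pow_e,
      Nat.descFactorial_of_lt (by omega), if_neg (by rintro rfl; omega)]
    simp

lemma adjoin_A_N : Algebra.adjoin k {A k p, N k p} = ⊤ := by
  set T := Algebra.adjoin k {A k p, N k p}
  have hA : A k p ∈ T := Algebra.subset_adjoin (by simp)
  have hN : N k p ∈ T := Algebra.subset_adjoin (by simp)
  have hs : ∀ q : k[X], algebraMap k[X] (Module.End k[X] (Fin p → k[X])) q ∈ T := by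
    intro q
    have hX : algebraMap k[X] (Module.End k[X] (Fin p → k[X])) X ∈ T := by
      rw [← A_pow_p]; exact T.pow_mem hA _
    have := Polynomial.aeval_algebraMap_apply (R := k) (Module.End k[X] (Fin p → k[X])) (X : k[X]) q
    rw [aeval_X_left_apply] at this
    rw [← this]
    exact Algebra.adjoin_le (by simpa using hX) (aeval_mem_adjoin_singleton k _)
  rw [eq_top_iff]
  intro f _
  set c : k := (-1) ^ (p - 1) * ((p - 1).factorial : k) with hc
  have hc0 : c ≠ 0 := by
    refine mul_ne_zero (pow_ne_zero _ (by simp)) ?_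
    rw [Ne, CharP.cast_eq_zero_iff k p, (Fact.out : p.Prime).dvd_factorial]
    have := (Fact.out : p.Prime).pos
    omega
  have hf : f = ∑ i : Fin p, ∑ j : Fin p,
      algebraMap k[X] (Module.End k[X] (Fin p → k[X])) (f (e k p j) i * C c⁻¹) *
        (A k p ^ (i : ℕ) * N k p ^ (p - 1) * A k p ^ (p - 1 - j)) := by
    refine ext_e k p fun l hl => ?_
    lift l to Fin p using hl
    have hE : ∀ (i j : Fin p) (x : k[X]),
        (algebraMap k[X] (Module.End k[X] (Fin p → k[X])) x *
        (A k p ^ (i : ℕ) * N k p ^ (p - 1) * A k p ^ (p - 1 - j))) (e k p l) =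
        if l = j then (x * C c) • e k p i else 0 := by
      intro i j x
      rw [Module.End.mul_apply, single_comp, Module.algebraMap_end_apply]
      split_ifs
      · rw [smul_smul]
      · simp
    simp only [LinearMap.sum_apply, hE, Finset.sum_ite_eq, Finset.mem_univ, if_true]
    have hcc : (C c⁻¹ * C c : k[X]) = 1 := by rw [← C_mul, inv_mul_cancel₀ hc0, C_1]
    simp only [mul_assoc, hcc, mul_one, e_fin]
    exact pi_eq_sum_univ' _
  rw [hf]
  exact sum_mem fun i _ => sum_mem fun j _ => T.mul_mem (hs _)
    (T.mul_mem (T.mul_mem (T.pow_mem hA _) (T.pow_mem hN _)) (T.pow_mem hA _))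

end Action

/-! ### The isomorphism -/

/-- A surjective algebra map onto the endomorphisms of `k[t]^p` from an algebra generated by `a`
and `d` with `[a, d] = 1` and `d^p = 0` is injective as soon as it sends `a^p` to `t`. -/
lemma injective_of_surjective {k R : Type*} [Field k] [Ring R] [Algebra k R] {p : ℕ} (hp : 0 < p)
    {a d : R} (h : a * d = d * a + 1) (hd : d ^ p = 0) (hg : Algebra.adjoin k {a, d} = ⊤)
    (φ : R →ₐ[k] Module.End k[X] (Fin p → k[X])) (hφ : Function.Surjective φ)
    (ht : φ (a ^ p) = algebraMap k[X] _ X) : Function.Injective φ := by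
  have hΨ := spanMap_surjective hp h hd hg
  let Θ : Matrix (Fin p) (Fin p) k[X] →ₗ[k[X]] Module.End k[X] (Fin p → k[X]) :=
    ∑ i : Fin p, ∑ j : Fin p,
      (LinearMap.toSpanSingleton k[X] _ (φ (a ^ (i : ℕ) * d ^ (j : ℕ)))) ∘ₗ
        Matrix.entryLinearMap k[X] k[X] i j
  have hΘ : ∀ c, Θ c = φ (spanMap k p a d c) := by
    intro c
    have hq : ∀ q : k[X], φ (aeval (a ^ p) q) = algebraMap k[X] _ q := fun q => by
      rw [← aeval_algHom_apply, ht, aeval_algebraMap_apply, aeval_X_left_apply]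
    simp only [Θ, spanMap_apply, map_sum, LinearMap.sum_apply, map_mul φ (aeval _ _), hq,
      ← Algebra.smul_def]
    rfl
  have hΘs : Function.Surjective Θ := by
    have : (Θ : _ → _) = φ ∘ spanMap k p a d := funext hΘ
    rw [this]
    exact hφ.comp hΨ
  have hΘi : Function.Injective Θ := by
    have := OrzechProperty.injective_of_surjective_endomorphism
      ((LinearMap.toMatrix' : _ ≃ₗ[k[X]] Matrix (Fin p) (Fin p) k[X]).toLinearMap ∘ₗ Θ)
      (LinearMap.toMatrix'.surjective.comp hΘs)
    rw [LinearMap.coe_comp] at this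
    exact Function.Injective.of_comp this
  intro x y hxy
  obtain ⟨x, rfl⟩ := hΨ x
  obtain ⟨y, rfl⟩ := hΨ y
  rw [← hΘ, ← hΘ] at hxy
  rw [hΘi hxy]

end WeylModDp

open WeylModDp

/-- For a field `k` of prime characteristic `p`, the quotient `W₁(k)/(D^p)` is
isomorphic, as a `k[α^p]`-algebra, to the `p × p` matrix algebra over `k[α^p]`:
there is a `k`-algebra isomorphism to `Matₚ(k[t])` sending the (central) image of
`α^p` to the scalar matrix `t`. -/
theorem weyl_mod_Dp_iso_matrix (k : Type*) [Field k] (p : ℕ) [Fact p.Prime]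
    [CharP k p] :
    ∃ e : RingQuot (WeylModDpRel k p) ≃ₐ[k] Matrix (Fin p) (Fin p) (Polynomial k),
      e (RingQuot.mkAlgHom k (WeylModDpRel k p) ((FreeAlgebra.ι k 0) ^ p)) =
        algebraMap (Polynomial k) (Matrix (Fin p) (Fin p) (Polynomial k))
          Polynomial.X := by
  let F : FreeAlgebra k (Fin 2) →ₐ[k] Module.End (Polynomial k) (Fin p → Polynomial k) :=
    FreeAlgebra.lift k ![A k p, N k p]
  have F0 : F (FreeAlgebra.ι k 0) = A k p := by simp [F]
  have F1 : F (FreeAlgebra.ι k 1) = N k p := by simp [F]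
  have hF : ∀ ⦃x y⦄, WeylModDpRel k p x y → F x = F y := by
    rintro _ _ (_ | _)
    · simp only [map_mul, map_add, map_one, F0, F1, A_mul_N]
    · simp only [map_pow, F1, N_pow_p, map_zero]
  let π := RingQuot.mkAlgHom k (WeylModDpRel k p)
  let φ : RingQuot (WeylModDpRel k p) →ₐ[k]
      Module.End (Polynomial k) (Fin p → Polynomial k) := RingQuot.liftAlgHom k ⟨F, hF⟩
  have φπ : ∀ x, φ (π x) = F x := RingQuot.liftAlgHom_mkAlgHom_apply k F hF
  have ht : φ (π (FreeAlgebra.ι k 0 ^ p)) = algebraMap (Polynomial k) _ Polynomial.X := by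
    rw [φπ, map_pow, F0, A_pow_p]
  have hrel : π (FreeAlgebra.ι k 0) * π (FreeAlgebra.ι k 1) =
      π (FreeAlgebra.ι k 1) * π (FreeAlgebra.ι k 0) + 1 := by
    simpa using RingQuot.mkAlgHom_rel k (WeylModDpRel.weyl (k := k) (p := p))
  have hd : π (FreeAlgebra.ι k 1) ^ p = 0 := by
    simpa using RingQuot.mkAlgHom_rel k (WeylModDpRel.dp (k := k) (p := p))
  have hg : Algebra.adjoin k {π (FreeAlgebra.ι k 0), π (FreeAlgebra.ι k 1)} = ⊤ := by
    have h1 : Set.range (FreeAlgebra.ι k : Fin 2 → _) =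
        {FreeAlgebra.ι k 0, FreeAlgebra.ι k 1} := by
      ext x; simp [Fin.exists_fin_two, eq_comm]
    have h2 := congrArg (Subalgebra.map π) (FreeAlgebra.adjoin_range_ι k (Fin 2))
    rw [h1, AlgHom.map_adjoin, Set.image_pair, Algebra.map_top] at h2
    rw [h2, AlgHom.range_eq_top]
    exact RingQuot.mkAlgHom_surjective k _
  have hs : Function.Surjective φ := by
    rw [← AlgHom.range_eq_top, eq_top_iff, ← adjoin_A_N, Algebra.adjoin_le_iff]
    rintro _ (rfl | rfl)
    · exact ⟨π (FreeAlgebra.ι k 0), by rw [← F0]; exact φπ _⟩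
    · exact ⟨π (FreeAlgebra.ι k 1), by rw [← F1]; exact φπ _⟩
  have hi : Function.Injective φ :=
    injective_of_surjective (Fact.out : p.Prime).pos hrel hd hg φ hs (by rw [← map_pow]; exact ht)
  let m : Module.End (Polynomial k) (Fin p → Polynomial k) ≃ₐ[k]
      Matrix (Fin p) (Fin p) (Polynomial k) :=
    (LinearMap.toMatrixAlgEquiv' (R := Polynomial k) (n := Fin p)).restrictScalars k
  refine ⟨(AlgEquiv.ofBijective φ ⟨hi, hs⟩).trans m, ?_⟩
  change LinearMap.toMatrixAlgEquiv' (φ (π _)) = _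
  rw [ht, AlgEquiv.commutes]
end

section
/- Let k be a field of characteristic p, and let M be a finite free module over k[[ℏ]] that is also a module over the completed Weyl algebra W̄_{n,ℏ} (generated over k[[ℏ]] by x_i, y_j with [x_i, y_j] = ℏδ_{ij}) such that the localized module M[ℏ^{-1}] is a nonzero module over W̄_{n,ℏ}[ℏ^{-1}] ≅ a central simple algebra of degree p^n over its center. Then the rank of M over k[[ℏ]] is divisible by p^n. -/
/-!
Extend scalars from `k⟦ℏ⟧` to an algebraically closed field `K` containing it; this keeps the rank
of `M`, and dividing the `yⱼ` by `ℏ` gives `n` canonical pairs `[xᵢ, yⱼ] = δᵢⱼ` on a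
finite-dimensional `K`-space `V`. It remains to show `p ^ n ∣ dim V`, by induction on `n`
(`pow_dvd_finrank`).

Replacing `x₀` by `x₀ + c` for a scalar `c` changes no commutator, so `x₀` may be taken injective.
Put `E = y₀ x₀`. Then `E x₀ = x₀ (E - 1)`, so `x₀` embeds the generalized eigenspace of `E` at `μ`
into the one at `μ - 1`. As `μ - p = μ`, all dimensions along an orbit of translation by `1` agree
(`finrank_maxGenEigenspace_sub_one`). The other pairs commute with `E` and hence act on each
generalized eigenspace, whose dimension is divisible by `p ^ (n - 1)` by induction. Since the
orbits have exactly `p` elements, summing over them gives the remaining factor `p`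
(`mul_dvd_sum_of_periodic`).
-/

/-- Relations for the Weyl algebra `W_{n,ℏ}` over `k[[ℏ]]`: generators
`xᵢ = ι (inl i)`, `yⱼ = ι (inr j)` with `[xᵢ,xⱼ] = [yᵢ,yⱼ] = 0` and
`[xᵢ, yⱼ] = ℏ δᵢⱼ`. -/
inductive WeylHRel (k : Type*) [Field k] (n : ℕ) :
    FreeAlgebra (PowerSeries k) (Fin n ⊕ Fin n) →
      FreeAlgebra (PowerSeries k) (Fin n ⊕ Fin n) → Prop
  | xx (i j : Fin n) : WeylHRel k n
      (FreeAlgebra.ι (PowerSeries k) (Sum.inl i) *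
        FreeAlgebra.ι (PowerSeries k) (Sum.inl j))
      (FreeAlgebra.ι (PowerSeries k) (Sum.inl j) *
        FreeAlgebra.ι (PowerSeries k) (Sum.inl i))
  | yy (i j : Fin n) : WeylHRel k n
      (FreeAlgebra.ι (PowerSeries k) (Sum.inr i) *
        FreeAlgebra.ι (PowerSeries k) (Sum.inr j))
      (FreeAlgebra.ι (PowerSeries k) (Sum.inr j) *
        FreeAlgebra.ι (PowerSeries k) (Sum.inr i))
  | xy (i j : Fin n) : WeylHRel k n
      (FreeAlgebra.ι (PowerSeries k) (Sum.inl i) *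
        FreeAlgebra.ι (PowerSeries k) (Sum.inr j))
      (FreeAlgebra.ι (PowerSeries k) (Sum.inr j) *
        FreeAlgebra.ι (PowerSeries k) (Sum.inl i)
        + if i = j then
            algebraMap (PowerSeries k) (FreeAlgebra (PowerSeries k) (Fin n ⊕ Fin n))
              PowerSeries.X
          else 0)

open Module

/-- In characteristic `p`, the orbits of translation by `1` on a finite set of scalars have `p`
elements, so a translation-invariant function with values divisible by `d` has sum divisible
by `p * d`. -/
lemma mul_dvd_sum_of_periodic {K : Type*} [Field K] (p : ℕ) [Fact p.Prime] [CharP K p]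
    (g : K → ℕ) (d : ℕ) (hg : ∀ a, g (a + 1) = g a) (hd : ∀ a, d ∣ g a) (S : Finset K)
    (hS : ∀ a ∈ S, a + 1 ∈ S) : p * d ∣ ∑ a ∈ S, g a := by
  classical
  induction S using Finset.strongInduction with
  | H S ih =>
    rcases S.eq_empty_or_nonempty with rfl | ⟨a, ha⟩
    · simp
    let c : ZMod p →+* K := ZMod.castHom dvd_rfl K
    have hc : Function.Injective c := c.injective
    have hstep : ∀ j : ZMod p, a + c j ∈ S ∧ g (a + c j) = g a := by
      intro j
      obtain ⟨m, rfl⟩ := ZMod.natCast_zmod_surjective j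
      induction m with
      | zero => simp [ha]
      | succ m ihm =>
        have : a + c ((m + 1 : ℕ) : ZMod p) = (a + c (m : ZMod p)) + 1 := by
          push_cast
          rw [map_add, map_one, add_assoc]
        rw [this]
        exact ⟨hS _ ihm.1, (hg _).trans ihm.2⟩
    let O : Finset K := Finset.univ.image fun j : ZMod p => a + c j
    have hinj : Function.Injective fun j : ZMod p => a + c j :=
      fun i j h => hc (add_left_cancel h)
    have hOS : O ⊆ S := by
      intro b hb
      obtain ⟨j, -, rfl⟩ := Finset.mem_image.1 hb
      exact (hstep j).1
    have haO : a ∈ O := Finset.mem_image.2 ⟨0, Finset.mem_univ _, by simp⟩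
    have hO : ∑ b ∈ O, g b = p * g a := by
      rw [Finset.sum_image fun i _ j _ h => hinj h, Finset.sum_congr rfl fun j _ => (hstep j).2]
      simp [ZMod.card]
    rw [← Finset.sum_sdiff hOS, hO]
    refine dvd_add (ih _ (Finset.sdiff_ssubset hOS ⟨a, haO⟩) fun b hb => ?_)
      (mul_dvd_mul_left p (hd a))
    rw [Finset.mem_sdiff] at hb ⊢
    refine ⟨hS _ hb.1, fun h => hb.2 ?_⟩
    obtain ⟨j, -, hj⟩ := Finset.mem_image.1 h
    refine Finset.mem_image.2 ⟨j - 1, Finset.mem_univ _, ?_⟩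
    simp only [map_sub, map_one] at hj ⊢
    rw [← add_sub_assoc, hj, add_sub_cancel_right]

lemma finrank_maxGenEigenspace_le {K V : Type*} [Field K] [AddCommGroup V] [Module K V]
    [FiniteDimensional K V] {E x : End K V} (hx : Function.Injective x)
    (hE : E * x = x * (E - 1)) (μ : K) :
    finrank K (E.maxGenEigenspace μ) ≤ finrank K (E.maxGenEigenspace (μ - 1)) := by
  have hcomm : SemiconjBy x (E - μ • (1 : End K V)) (E - (μ - 1) • (1 : End K V)) := by
    unfold SemiconjBy
    rw [sub_mul, hE, sub_smul]
    simp only [mul_sub, sub_mul, mul_smul_comm, smul_mul_assoc, mul_one, one_mul, one_smul]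
    abel
  have hmaps : ∀ v ∈ E.maxGenEigenspace μ, x v ∈ E.maxGenEigenspace (μ - 1) := by
    intro v hv
    rw [End.mem_maxGenEigenspace] at hv ⊢
    obtain ⟨m, hm⟩ := hv
    refine ⟨m, ?_⟩
    have := congrArg (fun f : End K V => f v) (hcomm.pow_right m).eq
    simp only [End.mul_apply, hm, map_zero] at this
    exact this.symm
  refine LinearMap.finrank_le_finrank_of_injective (f := x.restrict hmaps) ?_
  intro v w h
  exact Subtype.ext (hx (congrArg Subtype.val h))

/-- The inequalities along `μ, μ - 1, …, μ - p = μ` close up, so they are equalities. -/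
lemma finrank_maxGenEigenspace_sub_one {K V : Type*} [Field K] (p : ℕ) [Fact p.Prime] [CharP K p]
    [AddCommGroup V] [Module K V] [FiniteDimensional K V] {E x : End K V}
    (hx : Function.Injective x) (hE : E * x = x * (E - 1)) (μ : K) :
    finrank K (E.maxGenEigenspace (μ - 1)) = finrank K (E.maxGenEigenspace μ) := by
  refine le_antisymm ?_ (finrank_maxGenEigenspace_le hx hE μ)
  have hiter : ∀ m : ℕ, finrank K (E.maxGenEigenspace (μ - 1)) ≤
      finrank K (E.maxGenEigenspace (μ - 1 - m)) := by
    intro m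
    induction m with
    | zero => rw [Nat.cast_zero, sub_zero]
    | succ m ih =>
      refine ih.trans ((finrank_maxGenEigenspace_le hx hE _).trans_eq ?_)
      rw [Nat.cast_succ, sub_sub _ (m : K) 1]
  have hp : ((p - 1 : ℕ) : K) = -1 := by
    rw [Nat.cast_sub (Fact.out : p.Prime).one_le, CharP.cast_eq_zero]
    simp
  have h := hiter (p - 1)
  rwa [hp, sub_neg_eq_add, sub_add_cancel] at h

lemma sum_finrank_maxGenEigenspace {K V : Type*} [Field K] [IsAlgClosed K] [DecidableEq K]
    [AddCommGroup V] [Module K V] [FiniteDimensional K V] (E : End K V) :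
    ∑ μ ∈ E.charpoly.roots.toFinset, finrank K (E.maxGenEigenspace μ) = finrank K V := by
  simp_rw [LinearMap.finrank_maxGenEigenspace_eq, ← Polynomial.count_roots]
  rw [Multiset.toFinset_sum_count_eq, IsAlgClosed.card_roots_eq_natDegree,
    LinearMap.charpoly_natDegree]

/-- Over an algebraically closed field of characteristic `p`, a finite-dimensional space carrying
`n` commuting canonical pairs has dimension divisible by `p ^ n`. -/
lemma pow_dvd_finrank {K : Type*} [Field K] [IsAlgClosed K] (p : ℕ) [Fact p.Prime] [CharP K p]
    (n : ℕ) : ∀ (V : Type*) [AddCommGroup V] [Module K V] [FiniteDimensional K V]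
    (x y : Fin n → End K V) (_ : ∀ i j, x i * x j = x j * x i) (_ : ∀ i j, y i * y j = y j * y i)
    (_ : ∀ i j, x i * y j = y j * x i + if i = j then 1 else 0), p ^ n ∣ finrank K V := by
  classical
  induction n with
  | zero => simp
  | succ n ih =>
    intro V _ _ _ x y hxx hyy hxy
    obtain ⟨c, hc⟩ := Infinite.exists_notMem_finset (x 0).charpoly.roots.toFinset
    -- Shift `x 0` by a scalar which is not an eigenvalue, to make it injective.
    let X : End K V := x 0 - algebraMap K _ c
    have hX : Function.Injective X := by
      rw [← LinearMap.ker_eq_bot]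
      by_contra h
      apply hc
      rw [Multiset.mem_toFinset, Polynomial.mem_roots (LinearMap.charpoly_monic _).ne_zero,
        ← End.hasEigenvalue_iff_isRoot_charpoly]
      rw [End.hasEigenvalue_iff, End.eigenspace_def]
      simpa [X, Algebra.algebraMap_eq_smul_one] using h
    let E : End K V := y 0 * X
    have hXy : X * y 0 = y 0 * X + 1 := by
      have := hxy 0 0
      simp only [if_true] at this
      simp only [X, sub_mul, mul_sub, this, Algebra.commutes c (y 0)]
      abel
    have hE : E * X = X * (E - 1) := by
      simp only [E, mul_sub, ← mul_assoc, hXy]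
      simp [add_mul]
    have hxE : ∀ i : Fin n, Commute E (x i.succ) := by
      intro i
      have h1 : Commute (y 0) (x i.succ) := by
        have := hxy i.succ 0
        rw [if_neg (Fin.succ_ne_zero i), add_zero] at this
        exact this.symm
      have h2 : Commute X (x i.succ) :=
        Commute.sub_left (hxx 0 i.succ) (Algebra.commutes c _)
      exact h1.mul_left h2
    have hyE : ∀ i : Fin n, Commute E (y i.succ) := by
      intro i
      have h1 : Commute (x 0) (y i.succ) := by
        have := hxy 0 i.succ
        rw [if_neg (Fin.succ_ne_zero i).symm, add_zero] at this
        exact this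
      have h2 : Commute X (y i.succ) := Commute.sub_left h1 (Algebra.commutes c _)
      exact Commute.mul_left (hyy 0 i.succ) h2
    have hdvd : ∀ μ, p ^ n ∣ finrank K (E.maxGenEigenspace μ) := by
      intro μ
      refine ih (E.maxGenEigenspace μ)
        (fun i => (x i.succ).restrict (End.mapsTo_maxGenEigenspace_of_comm (hxE i) μ))
        (fun i => (y i.succ).restrict (End.mapsTo_maxGenEigenspace_of_comm (hyE i) μ)) ?_ ?_ ?_
      · intro i j
        ext v
        exact congrArg (fun f : End K V => f v) (hxx i.succ j.succ)
      · intro i j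
        ext v
        exact congrArg (fun f : End K V => f v) (hyy i.succ j.succ)
      · intro i j
        ext v
        have := congrArg (fun f : End K V => f v) (hxy i.succ j.succ)
        by_cases hij : i = j
        · subst hij
          simp only [if_true] at this ⊢
          exact this
        · have hij' : i.succ ≠ j.succ := fun h => hij (Fin.succ_injective _ h)
          simp only [if_neg hij, if_neg hij'] at this ⊢
          exact this
    have hper : ∀ μ, finrank K (E.maxGenEigenspace (μ + 1)) = finrank K (E.maxGenEigenspace μ) := by
      intro μ
      have h := finrank_maxGenEigenspace_sub_one p hX hE (μ + 1)
      rw [add_sub_cancel_right] at h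
      exact h.symm
    rw [← sum_finrank_maxGenEigenspace E, pow_succ']
    refine mul_dvd_sum_of_periodic p _ _ hper hdvd _ fun μ hμ => ?_
    have key := hper μ
    rw [LinearMap.finrank_maxGenEigenspace_eq, LinearMap.finrank_maxGenEigenspace_eq,
      ← Polynomial.count_roots, ← Polynomial.count_roots] at key
    rw [Multiset.mem_toFinset, ← Multiset.count_pos] at hμ ⊢
    omega

/-- Kac–Weisfeiler type statement: let `k` be a field of characteristic `p`, and
let `M` be a finite free `k[[ℏ]]`-module which is a module over the Weyl algebra
`W_{n,ℏ}` (generated over `k[[ℏ]]` by `xᵢ, yⱼ` with `[xᵢ, yⱼ] = ℏδᵢⱼ`),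
compatibly with the `k[[ℏ]]`-structure, such that `M[ℏ⁻¹]` is nonzero (i.e. `M`
is nontrivial).  Then the rank of `M` over `k[[ℏ]]` is divisible by `p^n`. -/
theorem rank_divisible_by_p_pow_n (k : Type*) [Field k] (p : ℕ) [Fact p.Prime]
    [CharP k p] (n : ℕ)
    (M : Type*) [AddCommGroup M] [Module (RingQuot (WeylHRel k n)) M]
    [Module (PowerSeries k) M]
    [IsScalarTower (PowerSeries k) (RingQuot (WeylHRel k n)) M]
    [Module.Finite (PowerSeries k) M] [Module.Free (PowerSeries k) M]
    [Nontrivial M] :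
    p ^ n ∣ Module.finrank (PowerSeries k) M := by
  let R := PowerSeries k
  let A := RingQuot (WeylHRel k n)
  let K := AlgebraicClosure (FractionRing R)
  have hinj : Function.Injective (algebraMap R K) := by
    rw [IsScalarTower.algebraMap_eq R (FractionRing R) K]
    exact (algebraMap (FractionRing R) K).injective.comp (IsFractionRing.injective R _)
  have : CharP K p :=
    charP_of_injective_ringHom ((algebraMap R K).comp (PowerSeries.C (R := k))).injective p
  have : SMulCommClass A R M := IsScalarTower.to_smulCommClass'
  let ψ : FreeAlgebra R (Fin n ⊕ Fin n) →ₐ[R] End K (TensorProduct R K M) :=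
    ((Module.End.baseChangeHom R K M).comp (Algebra.lsmul R R M (A := A))).comp
      (RingQuot.mkAlgHom R (WeylHRel k n))
  have hψ : ∀ {a b}, WeylHRel k n a b → ψ a = ψ b := by
    intro a b h
    simp only [ψ, AlgHom.comp_apply]
    rw [RingQuot.mkAlgHom_rel R h]
  let c : K := algebraMap R K PowerSeries.X
  have hc : c ≠ 0 := fun h => PowerSeries.X_ne_zero (hinj (h.trans (map_zero _).symm))
  rw [← Module.finrank_baseChange (R := K) (S := R) (M' := M)]
  refine pow_dvd_finrank (K := K) p n (TensorProduct R K M)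
    (fun i => ψ (FreeAlgebra.ι R (Sum.inl i)))
    (fun i => c⁻¹ • ψ (FreeAlgebra.ι R (Sum.inr i))) ?_ ?_ ?_
  · intro i j
    simpa using hψ (WeylHRel.xx i j)
  · intro i j
    have := hψ (WeylHRel.yy i j)
    simp only [map_mul] at this
    rw [smul_mul_smul_comm, smul_mul_smul_comm, this]
  · intro i j
    have h := hψ (WeylHRel.xy i j)
    simp only [map_mul, map_add] at h
    rw [mul_smul_comm, smul_mul_assoc, h, smul_add]
    congr 1
    split_ifs
    · rw [AlgHom.commutes, IsScalarTower.algebraMap_apply R K (End K _),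
        Algebra.algebraMap_eq_smul_one, smul_smul, inv_mul_cancel₀ hc, one_smul]
    · simp
end
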